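/- arXiv:1103.1462 — 2 statements merged into one kernel-verified Lean document; each statement's English description precedes it below -/
import Mathlib

section
/- Let D ⊆ ℂ be open and let f : ℂ → ℂ be nowhere-vanishing on D. Suppose that for every point x₀ + i·y₀ ∈ D there exist a neighborhood and functions R : ℝ × ℝ → ℝ and Θ : ℝ × ℝ → ℝ, differentiable (as real functions of two variables) on that neighborhood, with R > 0, f(x + i·y) = R(x, y) · exp(i·Θ(x, y)) on the neighborhood, and satisfying the Cauchy–Riemann *conditions there: the partial derivative in x of (x, y) ↦ Real.log (R(x, y)) equals the partial derivative in y of Θ, and the partial derivative in y of (x, y) ↦ Real.log (R(x, y)) equals the negative of the partial derivative in x of Θ. Then f is complex-differentiable (holomorphic) at every point of D; in particular the multiplicative derivative f*(z) = exp(f'(z)/f(z)) exists at every z ∈ D. -/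
open Complex

/- `log R + i Θ` is a local logarithm of `f`, and the Cauchy–Riemann *conditions are the classical
Cauchy–Riemann equations for it; so the logarithm is complex-differentiable, and hence so is
its exponential `f`. -/

section PartialDerivatives

variable {𝕜 E F : Type*} [NontriviallyNormedField 𝕜] [NormedAddCommGroup E] [NormedSpace 𝕜 E]
  [NormedAddCommGroup F] [NormedSpace 𝕜 F]

lemma hasDerivAt_fst_of_hasFDerivAt {g : 𝕜 × E → F} {g' : 𝕜 × E →L[𝕜] F} {a : 𝕜} {b : E}
    (hg : HasFDerivAt g g' (a, b)) : HasDerivAt (fun x => g (x, b)) (g' (1, 0)) a :=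
  hg.comp_hasDerivAt a ((hasDerivAt_id a).prodMk (hasDerivAt_const a b))

lemma hasDerivAt_snd_of_hasFDerivAt {g : E × 𝕜 → F} {g' : E × 𝕜 →L[𝕜] F} {a : E} {b : 𝕜}
    (hg : HasFDerivAt g g' (a, b)) : HasDerivAt (fun y => g (a, y)) (g' (0, 1)) b :=
  hg.comp_hasDerivAt b ((hasDerivAt_const b a).prodMk (hasDerivAt_id b))

end PartialDerivatives

lemma hasFDerivAt_ofReal_comp_re_im {g : ℝ × ℝ → ℝ} {g' : ℝ × ℝ →L[ℝ] ℝ} {z : ℂ}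
    (hg : HasFDerivAt g g' (z.re, z.im)) :
    HasFDerivAt (fun w : ℂ => (g (w.re, w.im) : ℂ))
      (ofRealCLM ∘L g' ∘L (equivRealProdCLM : ℂ →L[ℝ] ℝ × ℝ)) z :=
  ofRealCLM.hasFDerivAt.comp z (HasFDerivAt.comp (g := g) z hg equivRealProdCLM.hasFDerivAt)

lemma differentiableAt_of_hasFDerivAt_cauchyRiemann {u v : ℝ × ℝ → ℝ}
    {u' v' : ℝ × ℝ →L[ℝ] ℝ} {z : ℂ}
    (hu : HasFDerivAt u u' (z.re, z.im)) (hv : HasFDerivAt v v' (z.re, z.im))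
    (hx : u' (1, 0) = v' (0, 1)) (hy : u' (0, 1) = -v' (1, 0)) :
    DifferentiableAt ℂ (fun w : ℂ => (u (w.re, w.im) : ℂ) + I * (v (w.re, w.im) : ℂ)) z := by
  have hderiv := (hasFDerivAt_ofReal_comp_re_im hu).fun_add
    ((hasFDerivAt_ofReal_comp_re_im hv).const_mul I)
  refine (hderiv.complexOfReal_hasFDerivAt ?_).differentiableAt
  suffices (u' (0, 1) : ℂ) + I * v' (0, 1) = I * (u' (1, 0) + I * v' (1, 0)) by simpa using this
  rw [hx, hy, ofReal_neg]
  linear_combination (-(v' (1, 0) : ℂ)) * I_mul_I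

lemma differentiableAt_of_deriv_cauchyRiemann {u v : ℝ × ℝ → ℝ} {z : ℂ}
    (hu : DifferentiableAt ℝ u (z.re, z.im)) (hv : DifferentiableAt ℝ v (z.re, z.im))
    (hx : deriv (fun x => u (x, z.im)) z.re = deriv (fun y => v (z.re, y)) z.im)
    (hy : deriv (fun y => u (z.re, y)) z.im = -deriv (fun x => v (x, z.im)) z.re) :
    DifferentiableAt ℂ (fun w : ℂ => (u (w.re, w.im) : ℂ) + I * (v (w.re, w.im) : ℂ)) z := by
  rw [(hasDerivAt_fst_of_hasFDerivAt hu.hasFDerivAt).deriv,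
    (hasDerivAt_snd_of_hasFDerivAt hv.hasFDerivAt).deriv] at hx
  rw [(hasDerivAt_snd_of_hasFDerivAt hu.hasFDerivAt).deriv,
    (hasDerivAt_fst_of_hasFDerivAt hv.hasFDerivAt).deriv] at hy
  exact differentiableAt_of_hasFDerivAt_cauchyRiemann hu.hasFDerivAt hv.hasFDerivAt hx hy

lemma ofReal_mul_exp_eq_exp_log_add {r : ℝ} (hr : 0 < r) (w : ℂ) :
    (r : ℂ) * exp w = exp (Real.log r + w) := by
  rw [exp_add, ← ofReal_exp, Real.exp_log hr]

theorem star_holomorphic_of_cauchy_riemann_star_general {f : ℂ → ℂ} {z : ℂ} {R Θ : ℝ × ℝ → ℝ}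
    (hR : DifferentiableAt ℝ R (z.re, z.im)) (hΘ : DifferentiableAt ℝ Θ (z.re, z.im))
    (hpos : 0 < R (z.re, z.im))
    (hf : ∀ᶠ p : ℝ × ℝ in nhds (z.re, z.im),
      f ((p.1 : ℂ) + (p.2 : ℂ) * I) = (R p : ℂ) * Complex.exp (I * (Θ p : ℂ)))
    (hx : deriv (fun x => Real.log (R (x, z.im))) z.re = deriv (fun y => Θ (z.re, y)) z.im)
    (hy : deriv (fun y => Real.log (R (z.re, y))) z.im = -deriv (fun x => Θ (x, z.im)) z.re) :
    DifferentiableAt ℂ f z := by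
  have hlog := differentiableAt_of_deriv_cauchyRiemann (hR.log hpos.ne') hΘ hx hy
  refine hlog.cexp.congr_of_eventuallyEq ?_
  have htendsto : Filter.Tendsto (fun w : ℂ => (w.re, w.im)) (nhds z) (nhds (z.re, z.im)) :=
    equivRealProdCLM.continuous.tendsto z
  filter_upwards [htendsto.eventually hf,
    htendsto.eventually (hR.continuousAt.eventually_const_lt hpos)] with w hfw hRw
  calc f w = (R (w.re, w.im) : ℂ) * exp (I * (Θ (w.re, w.im) : ℂ)) := by
        rwa [re_add_im] at hfw
    _ = exp ((Real.log (R (w.re, w.im)) : ℂ) + I * (Θ (w.re, w.im) : ℂ)) :=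
        ofReal_mul_exp_eq_exp_log_add hRw _

/-- Theorem 2 (sufficiency direction): if `f` is nowhere-vanishing on the open set `D` and
near every point of `D` admits a differentiable polar decomposition `f = R·exp(i·Θ)` with
`R > 0` satisfying the Cauchy–Riemann *conditions, then `f` is holomorphic at every point of
`D`; in particular the multiplicative derivative `f*(z) = exp (f'(z)/f(z))` exists on `D`. -/
theorem star_holomorphic_of_cauchy_riemann_star
    (D : Set ℂ) (hD : IsOpen D) (f : ℂ → ℂ)
    (hne : ∀ z ∈ D, f z ≠ 0)
    (hloc : ∀ z ∈ D, ∃ U ∈ nhds ((z.re, z.im) : ℝ × ℝ), ∃ R Θ : ℝ × ℝ → ℝ,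
      (∀ p ∈ U, DifferentiableAt ℝ R p) ∧
      (∀ p ∈ U, DifferentiableAt ℝ Θ p) ∧
      (∀ p ∈ U, 0 < R p) ∧
      (∀ p ∈ U, f ((p.1 : ℂ) + (p.2 : ℂ) * I) = (R p : ℂ) * Complex.exp (I * (Θ p : ℂ))) ∧
      (∀ p ∈ U,
        deriv (fun x : ℝ => Real.log (R (x, p.2))) p.1 =
          deriv (fun y : ℝ => Θ (p.1, y)) p.2 ∧
        deriv (fun y : ℝ => Real.log (R (p.1, y))) p.2 =
          - deriv (fun x : ℝ => Θ (x, p.2)) p.1)) :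
    ∀ z ∈ D, DifferentiableAt ℂ f z := by
  intro z hz
  obtain ⟨U, hU, R, Θ, hR, hΘ, hpos, hf, hCR⟩ := hloc z hz
  have hzU := mem_of_mem_nhds hU
  exact star_holomorphic_of_cauchy_riemann_star_general (hR _ hzU) (hΘ _ hzU) (hpos _ hzU)
    (Filter.eventually_of_mem hU hf) (hCR _ hzU).1 (hCR _ hzU).2
end

section
/- Let D ⊆ ℝ × ℝ be open and connected, let f : ℝ × ℝ → ℝ be positive and continuously differentiable on D, and let γ = (x, y) : [a, b] → D (a < b) be a piecewise continuously differentiable curve. Then Real.exp of the integral ∫_a^b [ (∂₁f)(γ(t))·x'(t)/f(γ(t)) + (∂₂f)(γ(t))·y'(t)/f(γ(t)) ] dt equals f(γ(b))/f(γ(a)). (Equivalently, the line multiplicative integral ∫_C (f*_x)^{dx} (f*_y)^{dy} of the partial multiplicative derivatives of f along C equals f at the endpoint divided by f at the initial point.) -/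
/-- A curve `γ` is piecewise continuously differentiable on `[a, b]` if it is continuous
there and `[a, b]` splits into finitely many subintervals on each of which `γ` is `C¹`. -/
def PiecewiseC1On {E : Type*} [NormedAddCommGroup E] [NormedSpace ℝ E]
    (γ : ℝ → E) (a b : ℝ) : Prop :=
  ContinuousOn γ (Set.Icc a b) ∧
  ∃ (m : ℕ) (t : ℕ → ℝ), 0 < m ∧ t 0 = a ∧ t m = b ∧
    (∀ k < m, t k < t (k + 1)) ∧
    ∀ k < m, ContDiffOn ℝ 1 γ (Set.Icc (t k) (t (k + 1)))

/-!
The composite of a `C¹` function with a piecewise `C¹` curve is again piecewise `C¹`, so the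
gradient theorem is the fundamental theorem of calculus for such curves, telescoped over a
partition, together with the chain rule. Applied to `log ∘ f`, whose differential is `df / f`, it
gives `∫ df / f = log f (γ b) - log f (γ a)` along the curve; exponentiate. The chain rule and the
splitting of `γ'` into coordinates fail at corners of `γ`, where `deriv` takes the junk value `0`,
but the corners form a null set.
-/

open Function MeasureTheory Set

section SmoothCurve

variable {E : Type*} [NormedAddCommGroup E] [NormedSpace ℝ E] {γ : ℝ → E} {a b : ℝ}
  {μ : Measure ℝ} [NullSingletonClass μ]

theorem intervalIntegrable_deriv_of_contDiffOn_Icc [IsLocallyFiniteMeasure μ]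
    (hγ : ContDiffOn ℝ 1 γ (Icc a b)) (hab : a ≤ b) : IntervalIntegrable (deriv γ) μ a b := by
  rcases hab.eq_or_lt with rfl | hlt
  · exact IntervalIntegrable.refl
  have hcont : ContinuousOn (derivWithin γ (Icc a b)) (Icc a b) :=
    hγ.continuousOn_derivWithin (uniqueDiffOn_Icc hlt) le_rfl
  refine (hcont.intervalIntegrable_of_Icc hab).congr_uIoo fun t ht => ?_
  rw [uIoo_of_le hab] at ht
  exact derivWithin_of_mem_nhds (Icc_mem_nhds ht.1 ht.2)

theorem ae_differentiableAt_of_differentiableOn_Ioo (hγ : DifferentiableOn ℝ γ (Ioo a b)) :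
    ∀ᵐ t ∂μ.restrict (Ioc a b), DifferentiableAt ℝ γ t := by
  rw [← restrict_Ioo_eq_restrict_Ioc]
  exact ae_restrict_of_forall_mem measurableSet_Ioo fun t ht =>
    hγ.differentiableAt (Ioo_mem_nhds ht.1 ht.2)

end SmoothCurve

theorem map_deriv_eq_smul_add_smul {𝕜 F : Type*} [NontriviallyNormedField 𝕜] [NormedAddCommGroup F]
    [NormedSpace 𝕜 F] (L : 𝕜 × 𝕜 →L[𝕜] F) {γ : 𝕜 → 𝕜 × 𝕜} {t : 𝕜}
    (hγ : DifferentiableAt 𝕜 γ t) :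
    L (deriv γ t) =
      deriv (fun s => (γ s).1) t • L (1, 0) + deriv (fun s => (γ s).2) t • L (0, 1) := by
  have hderiv : deriv γ t = (deriv (fun s => (γ s).1) t, deriv (fun s => (γ s).2) t) :=
    (hγ.fst.hasDerivAt.prodMk hγ.snd.hasDerivAt).deriv
  rw [hderiv, ← map_smul, ← map_smul, ← map_add]
  simp

namespace PiecewiseC1On

variable {E F : Type*} [NormedAddCommGroup E] [NormedSpace ℝ E] [NormedAddCommGroup F]
  [NormedSpace ℝ F] {γ : ℝ → E} {a b : ℝ}

theorem lt (hγ : PiecewiseC1On γ a b) : a < b := by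
  obtain ⟨-, m, t, hm, rfl, rfl, hlt, -⟩ := hγ
  exact strictMonoOn_Iic_of_lt_succ hlt (mem_Iic.2 hm.le) self_mem_Iic hm

theorem comp {g : E → F} {s : Set E} (hg : ContDiffOn ℝ 1 g s) (hγ : PiecewiseC1On γ a b)
    (hγs : MapsTo γ (Icc a b) s) : PiecewiseC1On (g ∘ γ) a b := by
  obtain ⟨hcont, m, t, hm, rfl, rfl, hlt, hC1⟩ := hγ
  have hmono : MonotoneOn t (Iic m) := (strictMonoOn_Iic_of_lt_succ hlt).monotoneOn
  have hsub : ∀ k < m, Icc (t k) (t (k + 1)) ⊆ Icc (t 0) (t m) := fun k hk =>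
    Icc_subset_Icc (hmono (mem_Iic.2 hm.le) (mem_Iic.2 hk.le) k.zero_le)
      (hmono (mem_Iic.2 hk) self_mem_Iic hk)
  exact ⟨hg.continuousOn.comp hcont hγs, m, t, hm, rfl, rfl, hlt,
    fun k hk => hg.comp (hC1 k hk) (hγs.mono_left (hsub k hk))⟩

theorem integral_deriv [CompleteSpace E] (hγ : PiecewiseC1On γ a b) :
    ∫ t in a..b, deriv γ t = γ b - γ a := by
  obtain ⟨-, m, t, -, rfl, rfl, hlt, hC1⟩ := hγ
  calc ∫ s in t 0..t m, deriv γ s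
    _ = ∑ k ∈ Finset.range m, ∫ s in t k..t (k + 1), deriv γ s :=
        (intervalIntegral.sum_integral_adjacent_intervals fun k hk =>
          intervalIntegrable_deriv_of_contDiffOn_Icc (hC1 k hk) (hlt k hk).le).symm
    _ = ∑ k ∈ Finset.range m, (γ (t (k + 1)) - γ (t k)) :=
        Finset.sum_congr rfl fun k hk =>
          intervalIntegral.integral_deriv_of_contDiffOn_Icc (hC1 k (Finset.mem_range.1 hk))
            (hlt k (Finset.mem_range.1 hk)).le
    _ = γ (t m) - γ (t 0) := Finset.sum_range_sub (fun k => γ (t k)) m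

theorem ae_differentiableAt {μ : Measure ℝ} [NullSingletonClass μ] (hγ : PiecewiseC1On γ a b) :
    ∀ᵐ t ∂μ.restrict (Ioc a b), DifferentiableAt ℝ γ t := by
  obtain ⟨-, m, t, -, rfl, rfl, -, hC1⟩ := hγ
  refine ae_restrict_of_ae_restrict_of_subset (Ioc_subset_biUnion_Ioc m t) ?_
  rw [ae_restrict_biUnion_finset_iff]
  exact fun k hk => ae_differentiableAt_of_differentiableOn_Ioo
    (((hC1 k (Finset.mem_range.1 hk)).differentiableOn one_ne_zero).mono Ioo_subset_Icc_self)

theorem integral_congr {μ : Measure ℝ} [NullSingletonClass μ] (hγ : PiecewiseC1On γ a b)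
    {u v : ℝ → F} (huv : ∀ t ∈ Icc a b, DifferentiableAt ℝ γ t → u t = v t) :
    ∫ t in a..b, u t ∂μ = ∫ t in a..b, v t ∂μ := by
  refine intervalIntegral.integral_congr_ae_restrict ?_
  rw [uIoc_of_le hγ.lt.le]
  filter_upwards [hγ.ae_differentiableAt, ae_restrict_mem measurableSet_Ioc] with t hdiff ht
  exact huv t (Ioc_subset_Icc_self ht) hdiff

theorem integral_fderiv_apply_deriv [CompleteSpace F] {g : E → F} {D : Set E} (hD : IsOpen D)
    (hg : ContDiffOn ℝ 1 g D) (hγ : PiecewiseC1On γ a b) (hγD : MapsTo γ (Icc a b) D) :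
    ∫ t in a..b, fderiv ℝ g (γ t) (deriv γ t) = g (γ b) - g (γ a) := by
  rw [← comp_apply (f := g), ← comp_apply (f := g) (x := a),
    ← (hγ.comp hg hγD).integral_deriv]
  refine hγ.integral_congr fun t ht hdiff => ?_
  have hgdiff : DifferentiableAt ℝ g (γ t) :=
    (hg.differentiableOn one_ne_zero).differentiableAt (hD.mem_nhds (hγD ht))
  exact (fderiv_comp_deriv t hgdiff hdiff).symm

theorem integral_fderiv_apply_deriv_div {f : E → ℝ} {D : Set E} (hD : IsOpen D)
    (hf : ContDiffOn ℝ 1 f D) (hf₀ : ∀ p ∈ D, f p ≠ 0) (hγ : PiecewiseC1On γ a b)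
    (hγD : MapsTo γ (Icc a b) D) :
    ∫ t in a..b, fderiv ℝ f (γ t) (deriv γ t) / f (γ t) =
      Real.log (f (γ b)) - Real.log (f (γ a)) := by
  rw [← hγ.integral_fderiv_apply_deriv hD (hf.log hf₀) hγD]
  refine hγ.integral_congr fun t ht _ => ?_
  have hfdiff : DifferentiableAt ℝ f (γ t) :=
    (hf.differentiableOn one_ne_zero).differentiableAt (hD.mem_nhds (hγD ht))
  rw [fderiv.log hfdiff (hf₀ _ (hγD ht)), smul_apply, smul_eq_mul, div_eq_inv_mul]

end PiecewiseC1On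

theorem fundamental_theorem_line_multiplicative_integral_general {E : Type*}
    [NormedAddCommGroup E] [NormedSpace ℝ E] {D : Set E} (hD : IsOpen D) {f : E → ℝ}
    (hfpos : ∀ p ∈ D, 0 < f p) (hf : ContDiffOn ℝ 1 f D) {a b : ℝ} {γ : ℝ → E}
    (hγD : MapsTo γ (Icc a b) D) (hγ : PiecewiseC1On γ a b) :
    Real.exp (∫ t in a..b, fderiv ℝ f (γ t) (deriv γ t) / f (γ t)) = f (γ b) / f (γ a) := by
  have ha : 0 < f (γ a) := hfpos _ (hγD (left_mem_Icc.2 hγ.lt.le))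
  have hb : 0 < f (γ b) := hfpos _ (hγD (right_mem_Icc.2 hγ.lt.le))
  rw [hγ.integral_fderiv_apply_deriv_div hD hf (fun p hp => (hfpos p hp).ne') hγD,
    Real.exp_sub, Real.exp_log hb, Real.exp_log ha]

/-- Theorem 3 (fundamental theorem of calculus for line *integrals): for a positive
continuously differentiable `f` on the open connected set `D` and a piecewise `C¹` curve
`γ = (x, y)` in `D`, the line multiplicative integral of the partial multiplicative
derivatives of `f` along the curve, namely
`exp (∫_a^b [(∂₁f)(γ t)·x'(t) + (∂₂f)(γ t)·y'(t)]/f(γ t) dt)`, equals `f(γ b)/f(γ a)`. -/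
theorem fundamental_theorem_line_multiplicative_integral
    (D : Set (ℝ × ℝ)) (hD : IsOpen D) (hDconn : IsConnected D)
    (f : ℝ × ℝ → ℝ) (hfpos : ∀ p ∈ D, 0 < f p) (hf : ContDiffOn ℝ 1 f D)
    (a b : ℝ) (hab : a < b) (γ : ℝ → ℝ × ℝ)
    (hγD : ∀ t ∈ Set.Icc a b, γ t ∈ D) (hγ : PiecewiseC1On γ a b) :
    Real.exp (∫ t in a..b,
        ((fderiv ℝ f (γ t)) (1, 0) * deriv (fun s => (γ s).1) t +
         (fderiv ℝ f (γ t)) (0, 1) * deriv (fun s => (γ s).2) t) / f (γ t)) =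
      f (γ b) / f (γ a) := by
  rw [← fundamental_theorem_line_multiplicative_integral_general hD hfpos hf hγD hγ]
  refine congrArg Real.exp (hγ.integral_congr fun t _ hdiff => ?_)
  simp only [map_deriv_eq_smul_add_smul _ hdiff, smul_eq_mul, mul_comm]
end
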